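/- RoundRobin is a 3/2-approximation algorithm for OnceSC: for every OnceSC instance (x,b) and every feasible schedule (ρ,τ) with lifetime T, the RoundRobin lifetime satisfies ∑_{i=1}^n b_i / max(x_i, 1 − x_i) ≥ (2/3)·T. -/

import Mathlib

/-!
The lifetime bound is a duality argument. Let `G : [0,1] → [0,2/3]` be the increasing bijection
`potential` below. For every sensor at `x` with radius `ρ`, the part `[l,r]` of `[0,1]` that it
covers satisfies `G r - G l ≤ ρ / max x (1 - x)` (`potential_clamp`); so `G` is a potential showing
that covering `[0,1]` costs at least `2/3` in units where RoundRobin pays `1`. The extremal cover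
consists of `[0,1/2]` and `[1/2,1]`, and `G` is the cost of `[0,t]` on the left half, reflected
on the right half.

A schedule of lifetime `T` gives a cover of the rectangle `[0,2/3] × [0,T]` by the rectangles
`[G l_i, G r_i] × [τ_i, τ_i + b_i/ρ_i]`. Comparing areas,
`(2/3) T ≤ ∑ (G r_i - G l_i) b_i / ρ_i ≤ ∑ b_i / max x_i (1 - x_i)`.
-/

/-- The dual potential: `t / (2 - t)` on the left half of `[0,1]`, extended by the symmetry
`G t + G (1 - t) = 2/3`. Only its values on `[0,1]` matter. -/
noncomputable def potential (t : ℝ) : ℝ :=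
  if t ≤ 1/2 then t / (2 - t) else 2/3 - (1 - t) / (1 + t)

lemma potential_nonneg {t : ℝ} (h0 : 0 ≤ t) (h1 : t ≤ 1) : 0 ≤ potential t := by
  unfold potential
  split_ifs with h
  · exact div_nonneg h0 (by linarith)
  · have : (1 - t) / (1 + t) ≤ 2/3 := by
      rw [div_le_iff₀ (by linarith)]; linarith
    linarith

lemma potential_le {t : ℝ} (h1 : t ≤ 1) : potential t ≤ 2/3 := by
  unfold potential
  split_ifs with h
  · rw [div_le_iff₀ (by linarith)]; linarith
  · have : 0 ≤ (1 - t) / (1 + t) := div_nonneg (by linarith) (by linarith)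
    linarith

lemma potential_mono {s t : ℝ} (hst : s ≤ t) :
    potential s ≤ potential t := by
  unfold potential
  split_ifs with hs ht ht
  · rw [div_le_div_iff₀ (by linarith) (by linarith)]; nlinarith
  · have h2 : s / (2 - s) ≤ 1/3 := by
      rw [div_le_iff₀ (by linarith)]; linarith
    have h3 : (1 - t) / (1 + t) ≤ 1/3 := by
      rw [div_le_iff₀ (by linarith)]; linarith
    linarith
  · linarith
  · have : (1 - t) / (1 + t) ≤ (1 - s) / (1 + s) := by
      rw [div_le_div_iff₀ (by linarith) (by linarith)]; nlinarith
    linarith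

lemma potential_surj {v : ℝ} (h0 : 0 ≤ v) (h1 : v ≤ 2/3) :
    ∃ t ∈ Set.Icc (0:ℝ) 1, potential t = v := by
  by_cases hv : v ≤ 1/3
  · have hp : 0 < 1 + v := by linarith
    refine ⟨2 * v / (1 + v), ⟨by positivity, ?_⟩, ?_⟩
    · rw [div_le_one hp]; linarith
    · have h : 2 * v / (1 + v) ≤ 1/2 := by
        rw [div_le_iff₀ hp]; linarith
      have h2 : 2 - 2 * v / (1 + v) = 2 / (1 + v) := by field_simp; ring
      rw [potential, if_pos h, h2]
      field_simp
  · have hp : 0 < 5/3 - v := by linarith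
    refine ⟨(1/3 + v) / (5/3 - v), ⟨div_nonneg (by linarith) hp.le, ?_⟩, ?_⟩
    · rw [div_le_one hp]; linarith
    · have h : ¬ (1/3 + v) / (5/3 - v) ≤ 1/2 := by
        rw [not_le, lt_div_iff₀ hp]; linarith
      have h2 : 1 + (1/3 + v) / (5/3 - v) = 2 / (5/3 - v) := by
        rw [eq_div_iff hp.ne', add_mul, div_mul_cancel₀ _ hp.ne']; ring
      have h3 : 1 - (1/3 + v) / (5/3 - v) = (4/3 - 2 * v) / (5/3 - v) := by
        rw [eq_div_iff hp.ne', sub_mul, div_mul_cancel₀ _ hp.ne']; ring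
      rw [potential, if_neg h, h2, h3, div_div_div_cancel_right₀ hp.ne']
      ring

/-- The polynomial inequality for an interval `[1/2 - p, 1/2 + q]` straddling the midpoint. -/
lemma straddle_aux {p q : ℝ} (hp : 0 ≤ p) (hp' : p ≤ 1/2) (hq : 0 ≤ q) (hq' : q ≤ 1/2) :
    2/3 - (1/2 - q) / (3/2 + q) - (1/2 - p) / (3/2 + p) ≤ (p + q) / (1 + q - p) := by
  have e : 2/3 - (1/2 - q) / (3/2 + q) - (1/2 - p) / (3/2 + p)
      = 8 * (q * (3 + 2 * p) + p * (3 + 2 * q)) / (3 * ((3 + 2 * q) * (3 + 2 * p))) := by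
    field_simp
    ring
  rw [e, div_le_div_iff₀ (by positivity) (by linarith)]
  -- The difference of the two sides, written as a sum of nonnegative terms.
  have key : (p + q) * (3 * ((3 + 2 * q) * (3 + 2 * p)))
      - 8 * (q * (3 + 2 * p) + p * (3 + 2 * q)) * (1 + q - p)
      = 3 * p * (1 - 2 * q) + 10 * p * q * (1 - 2 * q) + 3 * q * (1 - 2 * q) + 42 * p ^ 2
        + 44 * p ^ 2 * q := by ring
  have hq2 : 0 ≤ 1 - 2 * q := by linarith
  have : 0 ≤ 3 * p * (1 - 2 * q) + 10 * p * q * (1 - 2 * q) + 3 * q * (1 - 2 * q) + 42 * p ^ 2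
        + 44 * p ^ 2 * q := by positivity
  linarith

/-- Dual feasibility for a sensor whose interval is exactly `[l, r] ⊆ [0,1]`, that is, with
`x = (l + r) / 2` and `ρ = (r - l) / 2`. -/
lemma potential_sub_le {l r : ℝ} (h0 : 0 ≤ l) (hlr : l ≤ r) (h1 : r ≤ 1) :
    potential r - potential l ≤ (r - l) / max (l + r) (2 - l - r) := by
  unfold potential
  split_ifs with hr hl hl
  · rw [max_eq_right (by linarith)]
    rw [div_sub_div _ _ (by linarith) (by linarith),
      div_le_div_iff₀ (by nlinarith) (by linarith)]
    nlinarith [mul_nonneg (mul_nonneg h0 (h0.trans hlr)) (sub_nonneg.2 hlr)]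
  · linarith
  · rcases le_total (l + r) (2 - l - r) with h | h
    · rw [max_eq_right h]
      have := straddle_aux (p := r - 1/2) (q := 1/2 - l) (by linarith) (by linarith)
        (by linarith) (by linarith)
      ring_nf at this ⊢
      linarith
    · rw [max_eq_left h]
      have := straddle_aux (p := 1/2 - l) (q := r - 1/2) (by linarith) (by linarith)
        (by linarith) (by linarith)
      ring_nf at this ⊢
      linarith
  · rw [max_eq_left (by linarith)]
    have e : 2/3 - (1 - r) / (1 + r) - (2/3 - (1 - l) / (1 + l))
      = (1 - l) / (1 + l) - (1 - r) / (1 + r) := by ring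
    rw [e, div_sub_div _ _ (by linarith) (by linarith),
      div_le_div_iff₀ (by nlinarith) (by linarith)]
    nlinarith [mul_nonneg (mul_nonneg (sub_nonneg.2 h1) (sub_nonneg.2 (hlr.trans h1)))
      (sub_nonneg.2 hlr)]

/-- Dual feasibility: the potential gained on the covered part of `[0,1]` is at most the
RoundRobin cost of the sensor. If `ρ ≥ max x (1 - x)` the cost is at least `1`. Otherwise clipping
the interval to `[0,1]` does not raise its cost, since `max x (1 - x)` is `1`-Lipschitz in the
centre. -/
lemma potential_clamp {x ρ : ℝ} (hx0 : 0 ≤ x) (hx1 : x ≤ 1) (hρ : 0 < ρ) :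
    potential (min (x + ρ) 1) - potential (max (x - ρ) 0) ≤ ρ / max x (1 - x) := by
  have hM : 0 < max x (1 - x) := by
    rcases le_total x (1/2) with h | h
    · exact lt_max_of_lt_right (by linarith)
    · exact lt_max_of_lt_left (by linarith)
  set l := max (x - ρ) 0 with hl
  set r := min (x + ρ) 1 with hr
  have hl0 : 0 ≤ l := le_max_right _ _
  have hlx : l ≤ x := max_le (by linarith) hx0
  have hxr : x ≤ r := le_min (by linarith) hx1
  have hr1 : r ≤ 1 := min_le_right _ _
  have hrr : r ≤ x + ρ := min_le_left _ _
  have hll : x - ρ ≤ l := le_max_left _ _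
  rcases le_total (max x (1 - x)) ρ with h | h
  · have h2 : 1 ≤ ρ / max x (1 - x) := (one_le_div hM).2 h
    have := potential_nonneg hl0 (hlx.trans hx1)
    have := potential_le hr1
    linarith
  · refine (potential_sub_le hl0 (hlx.trans hxr) hr1).trans ?_
    have hN : 0 < max (l + r) (2 - l - r) := by
      rcases le_total (l + r) 1 with h | h
      · exact lt_max_of_lt_right (by linarith)
      · exact lt_max_of_lt_left (by linarith)
    rw [div_le_div_iff₀ hN hM]
    -- Clipping shortens the interval by `2 * ρ - (r - l)` and moves twice its centre by at
    -- most that much.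
    have hLip : 2 * max x (1 - x) - (2 * ρ - (r - l)) ≤ max (l + r) (2 - l - r) := by
      rcases max_choice x (1 - x) with h' | h' <;> rw [h']
      · exact le_max_of_le_left (by linarith)
      · exact le_max_of_le_right (by linarith)
    nlinarith [mul_le_mul_of_nonneg_left hLip hρ.le,
      mul_nonneg (sub_nonneg.2 h) (show 0 ≤ 2 * ρ - (r - l) by linarith)]


/-- A OnceSC schedule `(ρ, τ)` for the instance with sensors `1,…,n` at
locations `x` with (rational) batteries `b` has lifetime `T` if every point of
`[0,1]` is covered at every time in `[0,T]`. -/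
def IsLifetime (n : ℕ) (x : ℕ → ℝ) (b : ℕ → ℚ) (ρ τ : ℕ → ℝ) (T : ℝ) : Prop :=
  ∀ u ∈ Set.Icc (0:ℝ) 1, ∀ t ∈ Set.Icc (0:ℝ) T,
    ∃ i ∈ Finset.Icc 1 n, 0 < ρ i ∧ |u - x i| ≤ ρ i ∧ τ i ≤ t ∧ t ≤ τ i + (b i : ℝ) / ρ i

/-- RoundRobin is a `3/2`-approximation for OnceSC: for every instance and every
feasible schedule of lifetime `T`, the RoundRobin lifetime
`∑ i, b i / max (x i) (1 - x i)` is at least `(2/3) · T`. -/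
theorem roundRobin_three_halves_approx_onceSC
    (n : ℕ) (x : ℕ → ℝ) (b : ℕ → ℚ)
    (hx : ∀ i ∈ Finset.Icc 1 n, x i ∈ Set.Icc (0:ℝ) 1)
    (hb : ∀ i ∈ Finset.Icc 1 n, 0 < b i)
    (ρ τ : ℕ → ℝ)
    (hρ : ∀ i ∈ Finset.Icc 1 n, 0 ≤ ρ i)
    (hτ : ∀ i ∈ Finset.Icc 1 n, 0 ≤ τ i)
    (T : ℝ) (hT : IsLifetime n x b ρ τ T) :
    ∑ i ∈ Finset.Icc 1 n, (b i : ℝ) / max (x i) (1 - x i) ≥ (2/3) * T := by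
  classical
  have hM : ∀ i ∈ Finset.Icc 1 n, 0 ≤ (b i : ℝ) / max (x i) (1 - x i) := fun i hi =>
    div_nonneg (by exact_mod_cast (hb i hi).le) (le_max_of_le_left (hx i hi).1)
  rcases lt_or_ge T 0 with hT0 | hT0
  · have := Finset.sum_nonneg hM
    linarith
  let l : ℕ → ℝ := fun i => max (x i - ρ i) 0
  let r : ℕ → ℝ := fun i => min (x i + ρ i) 1
  let S := (Finset.Icc 1 n).filter fun i => 0 < ρ i
  let R : ℕ → Set (ℝ × ℝ) := fun i =>
    Set.Icc (potential (l i)) (potential (r i)) ×ˢ Set.Icc (τ i) (τ i + (b i : ℝ) / ρ i)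
  have hcover : Set.Icc (0:ℝ) (2/3) ×ˢ Set.Icc (0:ℝ) T ⊆ ⋃ i ∈ S, R i := by
    rintro ⟨v, t⟩ ⟨hv, ht⟩
    obtain ⟨u, hu, rfl⟩ := potential_surj hv.1 hv.2
    obtain ⟨i, hi, hρi, hui, hτ1, hτ2⟩ := hT u hu t ht
    obtain ⟨ha, hb'⟩ := abs_le.1 hui
    refine Set.mem_biUnion (Finset.mem_coe.2 (Finset.mem_filter.2 ⟨hi, hρi⟩))
      ⟨⟨?_, ?_⟩, hτ1, hτ2⟩
    · exact potential_mono (max_le (by linarith) hu.1)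
    · exact potential_mono (le_min (by linarith) hu.2)
  have hvol : ∀ i ∈ S, MeasureTheory.volume (R i)
      ≤ ENNReal.ofReal ((b i : ℝ) / max (x i) (1 - x i)) := by
    intro i hi
    obtain ⟨hi, hρi⟩ := Finset.mem_filter.1 hi
    have hbi : (0:ℝ) ≤ (b i : ℝ) / ρ i :=
      div_nonneg (by exact_mod_cast (hb i hi).le) hρi.le
    have hG := potential_clamp (hx i hi).1 (hx i hi).2 hρi
    rw [MeasureTheory.Measure.volume_eq_prod, MeasureTheory.Measure.prod_prod,
      Real.volume_Icc, Real.volume_Icc, ← ENNReal.ofReal_mul' (by linarith)]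
    refine ENNReal.ofReal_le_ofReal ?_
    rw [add_sub_cancel_left]
    calc _ ≤ ρ i / max (x i) (1 - x i) * ((b i : ℝ) / ρ i) :=
          mul_le_mul_of_nonneg_right hG hbi
      _ = (b i : ℝ) / max (x i) (1 - x i) := by
          field_simp
  have hle := (MeasureTheory.measure_mono (μ := MeasureTheory.volume) hcover).trans
    ((MeasureTheory.measure_biUnion_finset_le S R).trans (Finset.sum_le_sum hvol))
  rw [MeasureTheory.Measure.volume_eq_prod, MeasureTheory.Measure.prod_prod,
    Real.volume_Icc, Real.volume_Icc, ← ENNReal.ofReal_mul' (by linarith),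
    ← ENNReal.ofReal_sum_of_nonneg (fun i hi => hM i (Finset.mem_filter.1 hi).1),
    ENNReal.ofReal_le_ofReal_iff
      (Finset.sum_nonneg fun i hi => hM i (Finset.mem_filter.1 hi).1)] at hle
  have hsub : ∑ i ∈ S, (b i : ℝ) / max (x i) (1 - x i)
      ≤ ∑ i ∈ Finset.Icc 1 n, (b i : ℝ) / max (x i) (1 - x i) :=
    Finset.sum_le_sum_of_subset_of_nonneg (Finset.filter_subset _ _) fun i hi _ => hM i hi
  linarith
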